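/- Let 0 < α < 1, μ ∈ ℝ, and let c, f ∈ ℝ. Define V(t) = c E_{α,1}(-μ t^α) + f t^α E_{α,α+1}(-μ t^α) for t ≥ 0. Then V(0) = c and for every t > 0 the Caputo derivative of order α of V satisfies (D^α V)(t) + μ V(t) = f. -/

import Mathlib

open MeasureTheory

/-- The two-parameter Mittag-Leffler function `E_{a,b}(z) = ∑_{k=0}^∞ z^k / Γ(a k + b)`. -/
noncomputable def mittagLeffler (a b z : ℝ) : ℝ := ∑' k : ℕ, z ^ k / Real.Gamma (a * k + b)

open Set Filter

lemma integral_rpow_mul_sub_rpow {u v a : ℝ} (hu : 0 < u) (hv : 0 < v) (ha : 0 < a) :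
    ∫ z in (0 : ℝ)..a, z ^ (u - 1) * (a - z) ^ (v - 1) =
      a ^ (u + v - 1) * (Real.Gamma u * Real.Gamma v / Real.Gamma (u + v)) := by
  have h := Complex.betaIntegral_scaled u v ha
  rw [Complex.betaIntegral_eq_Gamma_mul_div _ _ (by simpa) (by simpa), ← Complex.ofReal_add,
    Complex.Gamma_ofReal, Complex.Gamma_ofReal, Complex.Gamma_ofReal] at h
  apply Complex.ofReal_injective
  rw [← intervalIntegral.integral_ofReal]
  push_cast
  rw [Complex.ofReal_cpow ha.le]
  push_cast at h ⊢
  rw [← h]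
  refine intervalIntegral.integral_congr fun z hz => ?_
  rw [uIcc_of_le ha.le] at hz
  rw [Complex.ofReal_cpow hz.1, Complex.ofReal_cpow (sub_nonneg.2 hz.2)]
  push_cast
  rfl

lemma intervalIntegrable_rpow_mul_sub_rpow {u v a : ℝ} (hu : 0 < u) (hv : 0 < v) (ha : 0 < a) :
    IntervalIntegrable (fun z : ℝ => z ^ (u - 1) * (a - z) ^ (v - 1)) volume 0 a := by
  by_contra h
  have hpos : 0 < a ^ (u + v - 1) * (Real.Gamma u * Real.Gamma v / Real.Gamma (u + v)) := by
    have := Real.Gamma_pos_of_pos hu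
    have := Real.Gamma_pos_of_pos hv
    have := Real.Gamma_pos_of_pos (add_pos hu hv)
    positivity
  rw [← integral_rpow_mul_sub_rpow hu hv ha] at hpos
  rw [intervalIntegral.integral_undef h] at hpos
  exact hpos.false

lemma exp_neg_mul_rpow_le_Gamma {s M : ℝ} (hs : 1 ≤ s) (hM : 0 < M) :
    Real.exp (-(M + 1)) * M ^ (s - 1) ≤ Real.Gamma s := by
  have hs0 : 0 < s := by linarith
  have hint := Real.GammaIntegral_convergent hs0
  have hsub : Ioc M (M + 1) ⊆ Ioi 0 := fun x hx => hM.trans hx.1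
  rw [Real.Gamma_eq_integral hs0]
  calc Real.exp (-(M + 1)) * M ^ (s - 1)
      = ∫ _ in Ioc M (M + 1), Real.exp (-(M + 1)) * M ^ (s - 1) := by simp
    _ ≤ ∫ x in Ioc M (M + 1), Real.exp (-x) * x ^ (s - 1) := by
        refine setIntegral_mono_on (integrableOn_const (by simp)) (hint.mono_set hsub) measurableSet_Ioc fun x hx => ?_
        have h1 := hx.1.le
        have h2 := hx.2
        have h3 : 0 ≤ s - 1 := by linarith
        gcongr
    _ ≤ ∫ x in Ioi 0, Real.exp (-x) * x ^ (s - 1) := by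
        refine setIntegral_mono_set hint ?_ hsub.eventuallyLE
        filter_upwards [ae_restrict_mem measurableSet_Ioi] with x hx
        have : (0 : ℝ) < x := hx
        simp only [Pi.zero_apply]
        positivity

lemma summable_mittagLeffler {a : ℝ} (ha : 0 < a) (b z : ℝ) :
    Summable fun k : ℕ => z ^ k / Real.Gamma (a * k + b) := by
  set M : ℝ := (|z| + 1) ^ (1 / a) with hMdef
  have hz : 0 < |z| + 1 := by positivity
  have hM : 0 < M := by positivity
  have hMa : M ^ a = |z| + 1 := by
    rw [hMdef, ← Real.rpow_mul hz.le, one_div_mul_cancel ha.ne', Real.rpow_one]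
  have hr : |z| / (|z| + 1) < 1 := by rw [div_lt_one hz]; linarith
  have hgeo : Summable fun k : ℕ =>
      Real.exp (M + 1) * M ^ (1 - b) * (|z| / (|z| + 1)) ^ k :=
    (summable_geometric_of_lt_one (by positivity) hr).mul_left _
  refine Summable.of_norm_bounded_eventually_nat hgeo ?_
  have ht : Tendsto (fun k : ℕ => a * k + b) atTop atTop :=
    tendsto_atTop_add_const_right _ _ (tendsto_natCast_atTop_atTop.const_mul_atTop ha)
  filter_upwards [ht.eventually_ge_atTop 1] with k hk
  have hG := exp_neg_mul_rpow_le_Gamma hk hM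
  have hGpos : 0 < Real.Gamma (a * k + b) := Real.Gamma_pos_of_pos (by linarith)
  rw [norm_div, norm_pow, Real.norm_eq_abs, Real.norm_of_nonneg hGpos.le, div_le_iff₀ hGpos]
  have hid : |z| ^ k = Real.exp (M + 1) * M ^ (1 - b) * (|z| / (|z| + 1)) ^ k *
      (Real.exp (-(M + 1)) * M ^ (a * k + b - 1)) := by
    have h1 : M ^ (1 - b) * M ^ (a * k + b - 1) = (|z| + 1) ^ k := by
      rw [← Real.rpow_add hM, show 1 - b + (a * k + b - 1) = a * k by ring,
        Real.rpow_mul hM.le, hMa, Real.rpow_natCast]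
    have h2 : Real.exp (M + 1) * Real.exp (-(M + 1)) = 1 := by
      rw [← Real.exp_add, add_neg_cancel, Real.exp_zero]
    calc |z| ^ k = 1 * (|z| + 1) ^ k * (|z| / (|z| + 1)) ^ k := by
          rw [one_mul, ← mul_pow, mul_div_cancel₀ _ hz.ne']
      _ = _ := by rw [← h1]; nth_rewrite 1 [← h2]; ring
  calc |z| ^ k = _ := hid
    _ ≤ _ := by gcongr

lemma mittagLeffler_one_eq {a : ℝ} (ha : 0 < a) (z : ℝ) :
    mittagLeffler a 1 z = 1 + z * mittagLeffler a (a + 1) z := by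
  unfold mittagLeffler
  rw [(summable_mittagLeffler ha 1 z).tsum_eq_zero_add, ← tsum_mul_left]
  congr 1
  · simp
  · refine tsum_congr fun k => ?_
    rw [pow_succ', mul_div_assoc]
    congr 3
    push_cast
    ring

lemma mul_rpow_pow (m : ℝ) {t : ℝ} (ht : 0 ≤ t) (a : ℝ) (k : ℕ) :
    (m * t ^ a) ^ k = m ^ k * t ^ (a * k) := by
  rw [mul_pow, Real.rpow_mul ht, Real.rpow_natCast]

lemma hasDerivAt_rpow_mul_mittagLeffler {a : ℝ} (ha : 0 < a) (m : ℝ) {t : ℝ} (ht : 0 < t) :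
    HasDerivAt (fun x : ℝ => x ^ a * mittagLeffler a (a + 1) (m * x ^ a))
      (t ^ (a - 1) * mittagLeffler a a (m * t ^ a)) t := by
  have hF : ∀ x : ℝ, 0 < x → ∀ k : ℕ,
      x ^ a * ((m * x ^ a) ^ k / Real.Gamma (a * k + (a + 1))) =
        m ^ k / Real.Gamma (a * k + (a + 1)) * x ^ (a * k + a) := fun x hx k => by
    rw [mul_rpow_pow m hx.le, Real.rpow_add hx]
    ring
  have hF' : ∀ x : ℝ, 0 < x → ∀ k : ℕ,
      m ^ k / Real.Gamma (a * k + (a + 1)) * ((a * k + a) * x ^ (a * k + a - 1)) =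
        x ^ (a - 1) * ((m * x ^ a) ^ k / Real.Gamma (a * k + a)) := fun x hx k => by
    have hp : 0 < a * k + a := by positivity
    have hG := Real.Gamma_pos_of_pos hp
    rw [mul_rpow_pow m hx.le, add_sub_assoc, Real.rpow_add hx, ← add_assoc,
      Real.Gamma_add_one hp.ne']
    field_simp
  set C : ℝ := max ((t / 2) ^ (a - 1)) ((2 * t) ^ (a - 1)) with hC
  have hsum := ((summable_mittagLeffler ha a (m * (2 * t) ^ a)).norm).mul_left C
  have hmem : t ∈ Ioo (t / 2) (2 * t) := ⟨by linarith, by linarith⟩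
  have key := hasDerivAt_tsum_of_isPreconnected (y₀ := t) (y := t)
    (g := fun (k : ℕ) (x : ℝ) => m ^ k / Real.Gamma (a * k + (a + 1)) * x ^ (a * k + a))
    (g' := fun (k : ℕ) (x : ℝ) =>
      m ^ k / Real.Gamma (a * k + (a + 1)) * ((a * k + a) * x ^ (a * k + a - 1)))
    hsum isOpen_Ioo isPreconnected_Ioo ?_ ?_ hmem ?_ hmem
  · have h1 : ∑' k : ℕ, m ^ k / Real.Gamma (a * k + (a + 1)) *
        ((a * k + a) * t ^ (a * k + a - 1)) = t ^ (a - 1) * mittagLeffler a a (m * t ^ a) := by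
      rw [mittagLeffler, ← tsum_mul_left]
      exact tsum_congr (hF' t ht)
    rw [h1] at key
    refine key.congr_of_eventuallyEq ?_
    filter_upwards [lt_mem_nhds ht] with x hx
    rw [mittagLeffler, ← tsum_mul_left]
    exact tsum_congr (hF x hx)
  · intro k x hx
    have hx0 : 0 < x := by linarith [hx.1]
    exact (Real.hasDerivAt_rpow_const (Or.inl hx0.ne')).const_mul _
  · intro k x hx
    have hx0 : 0 < x := by linarith [hx.1]
    have hG : 0 < Real.Gamma (a * k + a) := Real.Gamma_pos_of_pos (by positivity)
    have hxC : x ^ (a - 1) ≤ C := by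
      rcases le_total 0 (a - 1) with h | h
      · exact (Real.rpow_le_rpow hx0.le hx.2.le h).trans (le_max_right _ _)
      · exact (Real.rpow_le_rpow_of_nonpos (by positivity) hx.1.le h).trans (le_max_left _ _)
    rw [hF' x hx0, norm_mul, Real.norm_of_nonneg (by positivity : 0 ≤ x ^ (a - 1))]
    simp only [norm_div, norm_pow, norm_mul]
    rw [Real.norm_of_nonneg (by positivity : 0 ≤ x ^ a),
      Real.norm_of_nonneg (by positivity : 0 ≤ (2 * t) ^ a)]
    have := hx.2.le
    gcongr
  · simp_rw [← hF t ht]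
    exact (summable_mittagLeffler ha (a + 1) (m * t ^ a)).mul_left _

lemma integral_rpow_mul_mittagLeffler {a : ℝ} (ha0 : 0 < a) (ha1 : a < 1) (m : ℝ) {t : ℝ}
    (ht : 0 < t) :
    ∫ z in (0 : ℝ)..t, z ^ (a - 1) * mittagLeffler a a (m * z ^ a) * (t - z) ^ (-a) =
      Real.Gamma (1 - a) * mittagLeffler a 1 (m * t ^ a) := by
  have hb : 0 < 1 - a := by linarith
  have hp : ∀ k : ℕ, 0 < a * k + a := fun k => by positivity
  have hint : ∀ k : ℕ, ∫ z in Ioc 0 t, z ^ (a * k + a - 1) * (t - z) ^ (-a) =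
      t ^ (a * k) * (Real.Gamma (a * k + a) * Real.Gamma (1 - a) / Real.Gamma (a * k + 1)) := by
    intro k
    have h := integral_rpow_mul_sub_rpow (hp k) hb ht
    rw [show 1 - a - 1 = -a by ring, show a * k + a + (1 - a) = a * k + 1 by ring,
      add_sub_cancel_right, intervalIntegral.integral_of_le ht.le] at h
    exact h
  have hintble : ∀ k : ℕ, IntegrableOn (fun z : ℝ => z ^ (a * k + a - 1) * (t - z) ^ (-a))
      (Ioc 0 t) := by
    intro k
    have h := intervalIntegrable_rpow_mul_sub_rpow (hp k) hb ht
    rw [show 1 - a - 1 = -a by ring, intervalIntegrable_iff_integrableOn_Ioc_of_le ht.le] at h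
    exact h
  have hval : ∀ (n : ℝ) (k : ℕ), ∫ z in Ioc 0 t,
      n ^ k / Real.Gamma (a * k + a) * (z ^ (a * k + a - 1) * (t - z) ^ (-a)) =
        Real.Gamma (1 - a) * ((n * t ^ a) ^ k / Real.Gamma (a * k + 1)) := by
    intro n k
    have hG := (Real.Gamma_pos_of_pos (hp k)).ne'
    rw [integral_const_mul, hint, mul_rpow_pow n ht.le]
    field_simp
  have hsum := hasSum_integral_of_summable_integral_norm (μ := volume.restrict (Ioc 0 t))
    (F := fun (k : ℕ) (z : ℝ) =>
      m ^ k / Real.Gamma (a * k + a) * (z ^ (a * k + a - 1) * (t - z) ^ (-a)))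
    (fun k => (hintble k).const_mul _) ?_
  · rw [intervalIntegral.integral_of_le ht.le]
    simp only [hval] at hsum
    rw [mittagLeffler, ← tsum_mul_left, hsum.tsum_eq]
    refine setIntegral_congr_fun measurableSet_Ioc fun z hz => ?_
    rw [mittagLeffler, ← tsum_mul_left, ← tsum_mul_right]
    refine tsum_congr fun k => ?_
    rw [mul_rpow_pow m hz.1.le, add_sub_assoc, Real.rpow_add hz.1]
    ring
  · have hnorm : ∀ k : ℕ, ∫ z in Ioc 0 t,
        ‖m ^ k / Real.Gamma (a * k + a) * (z ^ (a * k + a - 1) * (t - z) ^ (-a))‖ =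
          Real.Gamma (1 - a) * ((|m| * t ^ a) ^ k / Real.Gamma (a * k + 1)) := by
      intro k
      rw [← hval]
      refine setIntegral_congr_fun measurableSet_Ioc fun z hz => ?_
      have hz1 : 0 ≤ z ^ (a * k + a - 1) := Real.rpow_nonneg hz.1.le _
      have hz2 : 0 ≤ (t - z) ^ (-a) := Real.rpow_nonneg (sub_nonneg.2 hz.2) _
      rw [norm_mul, Real.norm_of_nonneg (mul_nonneg hz1 hz2), norm_div, norm_pow,
        Real.norm_eq_abs, Real.norm_of_nonneg (Real.Gamma_pos_of_pos (hp k)).le]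
    simp only [hnorm]
    exact (summable_mittagLeffler ha0 1 _).mul_left _

/-- For `0 < α < 1`, `V(t) = c E_{α,1}(-μ t^α) + f t^α E_{α,α+1}(-μ t^α)` satisfies
`V(0) = c` and `(D^α V)(t) + μ V(t) = f` for all `t > 0`, where `D^α` is the Caputo
fractional derivative of order `α`. -/
theorem caputo_ode_first_order (α μ c f : ℝ) (hα0 : 0 < α) (hα1 : α < 1)
    (V : ℝ → ℝ)
    (hV : ∀ t : ℝ, V t =
      c * mittagLeffler α 1 (-μ * t ^ α) + f * t ^ α * mittagLeffler α (α + 1) (-μ * t ^ α)) :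
    V 0 = c ∧
    ∀ t : ℝ, 0 < t →
      (1 / Real.Gamma (1 - α)) * (∫ z in (0:ℝ)..t, deriv V z * (t - z) ^ (-α)) + μ * V t = f := by
  have hVeq : V = fun t => c + (f - μ * c) * (t ^ α * mittagLeffler α (α + 1) (-μ * t ^ α)) := by
    funext t
    rw [hV, mittagLeffler_one_eq hα0]
    ring
  refine ⟨by simp [hVeq, Real.zero_rpow hα0.ne'], fun t ht => ?_⟩
  have hderiv : ∀ z : ℝ, 0 < z →
      deriv V z = (f - μ * c) * (z ^ (α - 1) * mittagLeffler α α (-μ * z ^ α)) := by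
    intro z hz
    rw [hVeq]
    exact (((hasDerivAt_rpow_mul_mittagLeffler hα0 (-μ) hz).const_mul _).const_add c).deriv
  have hint : ∫ z in (0:ℝ)..t, deriv V z * (t - z) ^ (-α) =
      (f - μ * c) * (Real.Gamma (1 - α) * mittagLeffler α 1 (-μ * t ^ α)) := by
    rw [← integral_rpow_mul_mittagLeffler hα0 hα1 (-μ) ht, ← intervalIntegral.integral_const_mul,
      intervalIntegral.integral_of_le ht.le, intervalIntegral.integral_of_le ht.le]
    refine setIntegral_congr_fun measurableSet_Ioc fun z hz => ?_
    rw [hderiv z hz.1]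
    ring
  have hG : Real.Gamma (1 - α) ≠ 0 := (Real.Gamma_pos_of_pos (by linarith)).ne'
  rw [hint, hVeq, mittagLeffler_one_eq hα0]
  field_simp
  ring
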